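/- Let F(u) = 1/π − (1−u)·cot(π(1−u)) for real u ∈ (0,1). (a) If T ≥ t₀ ≥ 2π, then (2π/T)·∫_{t₀}^{T} √(F(t/T)^2 + (1 − t/T)^2) · log(t/(2π)) dt ≤ (log(T/(2π)))^2 − (log(t₀/(2π)))^2. (b) If moreover t₀ ≥ 2πe and T ≥ 3t₀, then (2π/T)·∫_{t₀}^{T} √(F(t/T)^2 + (1 − t/T)^2) · log(t/(2π)) dt ≤ (log(T/(2π)))^2 − (log(t₀/(2π)))^2 − 2·C₁·log(eT/(2π)) + 2·C₂, where for k = 1, 2, C_k = ∑_{n ≥ 1} ζ(2n)·(1/(2n)^k − 2/(2n+1)^k + 1/(2n+2)^k). -/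

import Mathlib

open Real MeasureTheory

/-- `F(u) = 1/π − (1−u)·cot(π(1−u))`. -/
noncomputable def Fcot (u : ℝ) : ℝ := 1 / π - (1 - u) * Real.cot (π * (1 - u))

/-- `C_k = ∑_{n ≥ 1} ζ(2n)·(1/(2n)^k − 2/(2n+1)^k + 1/(2n+2)^k)`. -/
noncomputable def Cconst (k : ℕ) : ℝ :=
  ∑' n : ℕ, (riemannZeta (2 * ((n : ℂ) + 1))).re *
    (1 / (2 * ((n : ℝ) + 1)) ^ k - 2 / (2 * ((n : ℝ) + 1) + 1) ^ k
      + 1 / (2 * ((n : ℝ) + 1) + 2) ^ k)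


lemma cot_bound (x : ℝ) (hx0 : 0 < x) (hx1 : x < 1) :
    π * x * Real.cot (π * x) ≤ 1 - 2 * x ^ 2 / (1 - x ^ 2) - (π ^ 2 / 3 - 2) * x ^ 2 := by
  have hmem : (x : ℂ) ∈ Complex.integerComplement := by
    rw [Complex.mem_integerComplement_iff]
    rintro ⟨n, hn⟩
    have hn' : (n : ℝ) = x := by exact_mod_cast hn
    rw [← hn'] at hx0 hx1
    have h0 : (0 : ℤ) < n := by exact_mod_cast hx0
    have h1 : n < (1 : ℤ) := by exact_mod_cast hx1
    omega
  have hs := summable_cotTerm hmem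
  have he := cot_series_rep' hmem
  set r : ℕ → ℝ := fun n => 1 / (x - (n + 1)) + 1 / (x + (n + 1)) with hr
  have hrc : (fun n : ℕ => cotTerm (x : ℂ) n) = fun n => ((r n : ℝ) : ℂ) := by
    funext n; simp [cotTerm, hr]
  rw [hrc] at hs
  have hsr : Summable r := Complex.summable_ofReal.mp hs
  have her : π * Real.cot (π * x) - 1 / x = ∑' n, r n := by
    have : (∑' n : ℕ, (1 / ((x : ℂ) - (n + 1)) + 1 / ((x : ℂ) + (n + 1)))) = ((∑' n, r n : ℝ) : ℂ) := by
      rw [Complex.ofReal_tsum]; simp [hr]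
    rw [this] at he
    apply Complex.ofReal_injective
    rw [← he]; push_cast; rfl
  have hz : HasSum (fun n : ℕ => (1 : ℝ) / ((n : ℝ) + 1) ^ 2) (π ^ 2 / 6) := by
    have := (hasSum_nat_add_iff' (f := fun n : ℕ => (1 : ℝ) / (n : ℝ) ^ 2) 1).mpr hasSum_zeta_two
    simpa using this
  have hv := (hz.mul_left (-2 * x)).add (hasSum_ite_eq (0 : ℕ) (2 * x - 2 * x / (1 - x ^ 2)))
  have hx2 : 0 < 1 - x ^ 2 := by nlinarith
  have hle : ∑' n, r n ≤ _ := hsr.tsum_le_tsum (fun n => ?_) hv.summable |>.trans_eq hv.tsum_eq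
  · rw [← her] at hle
    have := mul_le_mul_of_nonneg_left hle hx0.le
    have e1 : x * (π * Real.cot (π * x) - 1 / x) = π * x * Real.cot (π * x) - 1 := by
      field_simp
    have e2 : x * (-2 * x * (π ^ 2 / 6) + (2 * x - 2 * x / (1 - x ^ 2))) =
      - 2 * x ^ 2 / (1 - x ^ 2) - (π ^ 2 / 3 - 2) * x ^ 2 := by ring
    rw [e1, e2] at this
    have e3 : - 2 * x ^ 2 / (1 - x ^ 2) = - (2 * x ^ 2 / (1 - x ^ 2)) := by ring
    linarith
  · have hn : (0 : ℝ) ≤ n := Nat.cast_nonneg n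
    have hp : 0 < ((n : ℝ) + 1) ^ 2 - x ^ 2 := by nlinarith
    have e : r n = - (2 * x / (((n : ℝ) + 1) ^ 2 - x ^ 2)) := by
      have a : x - (n + 1) ≠ 0 := by linarith
      have b : x + (n + 1) ≠ 0 := by positivity
      simp only [hr]
      rw [div_add_div _ _ a b, ← neg_div, div_eq_div_iff (mul_ne_zero a b) hp.ne']
      ring
    rw [e]
    rcases Nat.eq_zero_or_pos n with rfl | hpos
    · simp
    · simp only [hpos.ne', if_false, add_zero]
      have : 2 * x / ((n : ℝ) + 1) ^ 2 ≤ 2 * x / (((n : ℝ) + 1) ^ 2 - x ^ 2) := by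
        apply div_le_div_of_nonneg_left (by positivity) hp
        nlinarith
      have e4 : -2 * x * (1 / ((n : ℝ) + 1) ^ 2) = - (2 * x / ((n : ℝ) + 1) ^ 2) := by ring
      linarith

lemma pi_sq_bounds : 9.869 < π ^ 2 ∧ π ^ 2 < 9.87 := by
  have h1 := Real.pi_gt_d4
  have h2 := Real.pi_lt_d4
  constructor <;> nlinarith

lemma poly_pos (x : ℝ) (hx0 : 0 < x) (hx1 : x < 1) :
    0 ≤ 0.666 - 1.5323 * x - 0.2823 * x ^ 2 + 2.1949 * x ^ 3
      + 0.3343 * x ^ 4 - 0.944 * x ^ 5 := by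
  have h : x ^ 5 ≤ x ^ 4 := pow_le_pow_of_le_one hx0.le hx1.le (by norm_num)
  have hh : 0 ≤ 0.666 - 1.5323 * x - 0.2823 * x ^ 2 + 2.1949 * x ^ 3 - 0.6097 * x ^ 4 := by
    nlinarith [mul_nonneg hx0.le (sq_nonneg (x - 0.563)), sq_nonneg (x - 0.563), 
      mul_nonneg (mul_nonneg hx0.le (sub_nonneg.2 hx1.le)) (sq_nonneg (x - 0.563)),
      mul_nonneg ((sub_nonneg.2 hx1.le)) (sq_nonneg (x - 0.563))]
  linarith

lemma G_bound (x : ℝ) (hx0 : 0 < x) (hx1 : x < 1) :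
    Real.sqrt (Fcot x ^ 2 + (1 - x) ^ 2) ≤ 1 / (π * x) + (2 - 5 * x) * (1 + x) / (6 * π) := by
  have hpi := Real.pi_pos
  obtain ⟨p1, p2⟩ := pi_sq_bounds
  have hx2 : 0 < 1 - x ^ 2 := by nlinarith
  have c1 := cot_bound x hx0 hx1
  have c2 := cot_bound (1 - x) (by linarith) (by linarith)
  have hw2 : 0 < 1 - (1 - x) ^ 2 := by nlinarith
  -- F ≥ 0
  have hF0 : 0 ≤ π * x * Fcot x := by
    have a : 0 ≤ 2 * (1 - x) ^ 2 / (1 - (1 - x) ^ 2) := by positivity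
    have b : 0 ≤ (π ^ 2 / 3 - 2) * (1 - x) ^ 2 := mul_nonneg (by linarith) (sq_nonneg _)
    have e : π * x * Fcot x = x * (1 - π * (1 - x) * Real.cot (π * (1 - x))) := by
      unfold Fcot; field_simp
    rw [e]
    apply mul_nonneg hx0.le
    linarith
  have hcot : Real.cot (π * (1 - x)) = - Real.cot (π * x) := by
    rw [Real.cot_eq_cos_div_sin, Real.cot_eq_cos_div_sin, mul_sub, mul_one, Real.cos_pi_sub,
      Real.sin_pi_sub, neg_div]
  have hF1 : π * x * Fcot x ≤ (1 - x) * ((1 + 2 * x) / (1 + x) - 1.28 * x ^ 2) := by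
    have e : π * x * Fcot x = x + (1 - x) * (π * x * Real.cot (π * x)) := by
      unfold Fcot; rw [hcot]; field_simp; ring
    rw [e]
    have b : π * x * Real.cot (π * x) ≤ 1 - 2 * x ^ 2 / (1 - x ^ 2) - 1.28 * x ^ 2 := by
      nlinarith [sq_nonneg x]
    have := mul_le_mul_of_nonneg_left b (sub_nonneg.2 hx1.le)
    have e2 : (1 - x) * ((1 + 2 * x) / (1 + x) - 1.28 * x ^ 2)
        = x + (1 - x) * (1 - 2 * x ^ 2 / (1 - x ^ 2) - 1.28 * x ^ 2) := by
      have : (1 - x ^ 2) = (1 - x) * (1 + x) := by ring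
      rw [this]
      have h1 : 1 - x ≠ 0 := by linarith
      have h2 : 1 + x ≠ 0 := by linarith
      field_simp
      ring
    linarith
  set V := (1 + 2 * x) / (1 + x) - 1.28 * x ^ 2 with hV
  have hP : V ^ 2 + π ^ 2 * x ^ 2 ≤ (1 + 4 / 3 * x + 5 / 6 * x ^ 2) ^ 2 := by
    have h2 : 0 < 1 + x := by linarith
    have hVe : V * (1 + x) = 1 + 2 * x - 1.28 * x ^ 2 * (1 + x) := by
      rw [hV]; field_simp
    have hs : V ^ 2 * (1 + x) ^ 2 = (1 + 2 * x - 1.28 * x ^ 2 * (1 + x)) ^ 2 := by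
      rw [← hVe]; ring
    have hpp := mul_nonneg hx0.le (poly_pos x hx0 hx1)
    have key : (V ^ 2 + π ^ 2 * x ^ 2) * (1 + x) ^ 2
        ≤ (1 + 4 / 3 * x + 5 / 6 * x ^ 2) ^ 2 * (1 + x) ^ 2 := by
      have hh : π ^ 2 * (x ^ 2 * (1 + x) ^ 2) ≤ 9.87 * (x ^ 2 * (1 + x) ^ 2) :=
        mul_le_mul_of_nonneg_right p2.le (by positivity)
      have q2 : 0 ≤ x ^ 2 := by positivity
      have q3 : 0 ≤ x ^ 3 := by positivity
      have q4 : 0 ≤ x ^ 4 := by positivity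
      have q5 : 0 ≤ x ^ 5 := by positivity
      have q6 : 0 ≤ x ^ 6 := by positivity
      rw [add_mul, hs]
      nlinarith
    exact le_of_mul_le_mul_right key (by positivity)
  have hRHS : 1 / (π * x) + (2 - 5 * x) * (1 + x) / (6 * π)
      = (1 - x) * (1 + 4 / 3 * x + 5 / 6 * x ^ 2) / (π * x) := by
    field_simp; ring
  rw [hRHS]
  apply Real.sqrt_le_iff.2
  constructor
  · have : 0 ≤ 1 - x := by linarith
    positivity
  · rw [div_pow, le_div_iff₀ (by positivity)]
    have hsq : (π * x * Fcot x) ^ 2 ≤ ((1 - x) * V) ^ 2 := pow_le_pow_left₀ hF0 hF1 2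
    have := mul_le_mul_of_nonneg_left hP (sq_nonneg (1 - x))
    nlinarith

lemma zeta_re_bounds (n : ℕ) : 0 ≤ (riemannZeta (2 * ((n : ℂ) + 1))).re ∧
    (riemannZeta (2 * ((n : ℂ) + 1))).re ≤ π ^ 2 / 6 := by
  have h := zeta_nat_eq_tsum_of_gt_one (k := 2 * (n + 1)) (by omega)
  have e : riemannZeta (2 * ((n : ℂ) + 1))
      = ((∑' m : ℕ, 1 / (m : ℝ) ^ (2 * (n + 1)) : ℝ) : ℂ) := by
    rw [Complex.ofReal_tsum]; push_cast at h ⊢; exact h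
  rw [e, Complex.ofReal_re]
  refine ⟨tsum_nonneg fun m => by positivity, ?_⟩
  rw [← hasSum_zeta_two.tsum_eq]
  refine Summable.tsum_le_tsum (fun m => ?_) ?_ hasSum_zeta_two.summable
  · rcases Nat.eq_zero_or_pos m with rfl | hm
    · simp
    · have : (1 : ℝ) ≤ m := by exact_mod_cast hm
      apply one_div_le_one_div_of_le (by positivity)
      exact pow_le_pow_right₀ this (by omega)
  · exact Real.summable_one_div_nat_pow.2 (by omega)

lemma C1_upper : Cconst 1 ≤ 0.19 := by
  unfold Cconst
  have hb := pi_sq_bounds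
  have ha : ∀ n : ℕ, (0 : ℝ) ≤ 1 / (2 * ((n : ℝ) + 1)) ^ 1 - 2 / (2 * ((n : ℝ) + 1) + 1) ^ 1
      + 1 / (2 * ((n : ℝ) + 1) + 2) ^ 1 ∧ 1 / (2 * ((n : ℝ) + 1)) ^ 1 - 2 / (2 * ((n : ℝ) + 1) + 1) ^ 1
      + 1 / (2 * ((n : ℝ) + 1) + 2) ^ 1 ≤ 3 / (2 * (3 * (2 * ((n : ℝ) + 1)) ^ 2 + 1))
        - 3 / (2 * (3 * (2 * ((n : ℝ) + 1 + 1)) ^ 2 + 1)) := by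
    intro n
    have hn : (0 : ℝ) ≤ n := Nat.cast_nonneg n
    generalize (n : ℝ) = y at hn
    have e : 1 / (2 * (y + 1)) ^ 1 - 2 / (2 * (y + 1) + 1) ^ 1
      + 1 / (2 * (y + 1) + 2) ^ 1 = 2 / ((2 * (y + 1)) * (2 * (y + 1) + 1) * (2 * (y + 1) + 2)) := by
      field_simp; ring
    rw [e]
    constructor
    · positivity
    · rw [div_sub_div _ _ (by positivity) (by positivity), div_le_div_iff₀ (by positivity) (by positivity)]
      rw [← sub_nonneg]
      ring_nf
      positivity
  apply Real.tsum_le_of_sum_range_le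
  · intro n
    exact mul_nonneg (zeta_re_bounds n).1 (ha n).1
  · intro N
    have h1 : ∑ n ∈ Finset.range N, (riemannZeta (2 * ((n : ℂ) + 1))).re *
      (1 / (2 * ((n : ℝ) + 1)) ^ 1 - 2 / (2 * ((n : ℝ) + 1) + 1) ^ 1
      + 1 / (2 * ((n : ℝ) + 1) + 2) ^ 1) ≤ ∑ n ∈ Finset.range N, π ^ 2 / 6 *
        (3 / (2 * (3 * (2 * ((n : ℝ) + 1)) ^ 2 + 1))
        - 3 / (2 * (3 * (2 * (((n + 1 : ℕ) : ℝ) + 1)) ^ 2 + 1))) := by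
      apply Finset.sum_le_sum
      intro n _
      push_cast
      exact mul_le_mul (zeta_re_bounds n).2 (ha n).2 (ha n).1 (by positivity)
    refine h1.trans ?_
    rw [← Finset.mul_sum,
      Finset.sum_range_sub' (fun n : ℕ => 3 / (2 * (3 * (2 * ((n : ℝ) + 1)) ^ 2 + 1)))]
    have h2 : (0 : ℝ) ≤ 3 / (2 * (3 * (2 * ((N : ℝ) + 1)) ^ 2 + 1)) := by positivity
    have h3 : 3 / (2 * (3 * (2 * (((0 : ℕ) : ℝ) + 1)) ^ 2 + 1)) = (3 / 26 : ℝ) := by norm_num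
    rw [h3]
    nlinarith

lemma C2_lower : 0.148 ≤ Cconst 2 := by
  unfold Cconst
  have hb := pi_sq_bounds
  have ha : ∀ n : ℕ, (0 : ℝ) ≤ 1 / (2 * ((n : ℝ) + 1)) ^ 2 - 2 / (2 * ((n : ℝ) + 1) + 1) ^ 2
      + 1 / (2 * ((n : ℝ) + 1) + 2) ^ 2 ∧ 1 / (2 * ((n : ℝ) + 1)) ^ 2 - 2 / (2 * ((n : ℝ) + 1) + 1) ^ 2
      + 1 / (2 * ((n : ℝ) + 1) + 2) ^ 2 ≤ 1 / ((n : ℝ) + 1) ^ 2 := by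
    intro n
    have hn : (0 : ℝ) ≤ n := Nat.cast_nonneg n
    generalize (n : ℝ) = y at hn
    constructor
    · have e : 1 / (2 * (y + 1)) ^ 2 - 2 / (2 * (y + 1) + 1) ^ 2 + 1 / (2 * (y + 1) + 2) ^ 2
        = (6 * (2 * y + 3) ^ 2 - 2) / ((2 * (y + 1)) ^ 2 * (2 * (y + 1) + 1) ^ 2 * (2 * (y + 1) + 2) ^ 2) := by
        field_simp; ring
      rw [e]
      apply div_nonneg _ (by positivity)
      nlinarith
    · have e1 : 1 / (2 * (y + 1)) ^ 2 = 1 / 4 * (1 / (y + 1) ^ 2) := by field_simp; norm_num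
      have e2 : 1 / (2 * (y + 1) + 2) ^ 2 ≤ 1 / 4 * (1 / (y + 1) ^ 2) := by
        rw [← e1]
        apply one_div_le_one_div_of_le (by positivity)
        nlinarith
      have e3 : 0 ≤ 2 / (2 * (y + 1) + 1) ^ 2 := by positivity
      have e4 : 0 ≤ 1 / (y + 1) ^ 2 := by positivity
      linarith
  have hz : HasSum (fun n : ℕ => (1 : ℝ) / ((n : ℝ) + 1) ^ 2) (π ^ 2 / 6) := by
    have := (hasSum_nat_add_iff' (f := fun n : ℕ => (1 : ℝ) / (n : ℝ) ^ 2) 1).mpr hasSum_zeta_two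
    simpa using this
  have hs : Summable (fun n : ℕ => (riemannZeta (2 * ((n : ℂ) + 1))).re *
    (1 / (2 * ((n : ℝ) + 1)) ^ 2 - 2 / (2 * ((n : ℝ) + 1) + 1) ^ 2
      + 1 / (2 * ((n : ℝ) + 1) + 2) ^ 2)) := by
    refine Summable.of_nonneg_of_le (fun n => mul_nonneg (zeta_re_bounds n).1 (ha n).1) (fun n => ?_)
      (hz.summable.mul_left (π ^ 2 / 6))
    exact mul_le_mul (zeta_re_bounds n).2 (ha n).2 (ha n).1 (by positivity)
  have := hs.le_tsum 0 (fun n _ => mul_nonneg (zeta_re_bounds n).1 (ha n).1)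
  refine le_trans ?_ this
  have h0 : (riemannZeta (2 * (((0 : ℕ) : ℂ) + 1))).re = π ^ 2 / 6 := by
    have : (2 * (((0 : ℕ) : ℂ) + 1)) = 2 := by norm_num
    rw [this, riemannZeta_two]
    have : (π : ℂ) ^ 2 / 6 = ((π ^ 2 / 6 : ℝ) : ℂ) := by push_cast; rfl
    rw [this, Complex.ofReal_re]
  rw [h0]
  norm_num
  linarith

lemma int_le (t₀ T : ℝ) (h1 : 2 * π ≤ t₀) (h2 : t₀ ≤ T) (g H : ℝ → ℝ)
    (hH : ∀ t ∈ Set.Icc t₀ T, HasDerivAt H (g t) t) (hg : ContinuousOn g (Set.Icc t₀ T))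
    (hle : ∀ t ∈ Set.Ioo t₀ T,
      (T / (π * t) + (2 - 5 * (t / T)) * (1 + t / T) / (6 * π)) * Real.log (t / (2 * π)) ≤ g t) :
    ∫ t in Set.Icc t₀ T,
        Real.sqrt (Fcot (t / T) ^ 2 + (1 - t / T) ^ 2) * Real.log (t / (2 * π))
      ≤ H T - H t₀ := by
  have hpi := Real.pi_pos
  have hFT : ∫ t in t₀..T, g t = H T - H t₀ := by
    apply intervalIntegral.integral_eq_sub_of_hasDerivAt
    · rwa [Set.uIcc_of_le h2]
    · apply ContinuousOn.intervalIntegrable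
      rwa [Set.uIcc_of_le h2]
  rw [← hFT, intervalIntegral.integral_of_le h2, integral_Icc_eq_integral_Ioo,
    integral_Ioc_eq_integral_Ioo]
  have hlog : ∀ t ∈ Set.Ioo t₀ T, 0 ≤ Real.log (t / (2 * π)) := by
    intro t ht
    apply Real.log_nonneg
    rw [le_div_iff₀ (by positivity)]
    linarith [ht.1]
  apply integral_mono_of_nonneg
  · filter_upwards [ae_restrict_mem measurableSet_Ioo] with t ht
    exact mul_nonneg (Real.sqrt_nonneg _) (hlog t ht)
  · exact (hg.integrableOn_Icc).mono_set Set.Ioo_subset_Icc_self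
  · filter_upwards [ae_restrict_mem measurableSet_Ioo] with t ht
    refine le_trans ?_ (hle t ht)
    have ht0 : 0 < t := by linarith [ht.1]
    have hT0 : 0 < T := by linarith [ht.2]
    have hb := G_bound (t / T) (by positivity) ((div_lt_one hT0).2 ht.2)
    have e : 1 / (π * (t / T)) = T / (π * t) := by field_simp
    rw [e] at hb
    exact mul_le_mul_of_nonneg_right hb (hlog t ht)

lemma hasDeriv_log (t : ℝ) (ht : 0 < t) :
    HasDerivAt (fun t => Real.log (t / (2 * π))) (1 / t) t := by
  have hpi := Real.pi_pos
  have := ((hasDerivAt_id t).div_const (2 * π)).log (by simp; positivity)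
  refine this.congr_deriv ?_
  change 1 / (2 * π) / (t / (2 * π)) = 1 / t
  field_simp

theorem part_a (t₀ T : ℝ) (h1 : 2 * π ≤ t₀) (h2 : t₀ ≤ T) :
    2 * π / T * ∫ t in Set.Icc t₀ T,
        Real.sqrt (Fcot (t / T) ^ 2 + (1 - t / T) ^ 2) * Real.log (t / (2 * π))
      ≤ Real.log (T / (2 * π)) ^ 2 - Real.log (t₀ / (2 * π)) ^ 2 := by
  have hpi := Real.pi_pos
  have ht₀ : 0 < t₀ := by linarith
  have hT : 0 < T := by linarith
  have hlogc : ContinuousOn (fun t => Real.log (t / (2 * π))) (Set.Icc t₀ T) := by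
    intro t ht
    exact (hasDeriv_log t (by linarith [ht.1])).continuousAt.continuousWithinAt
  have hc1 : ContinuousOn (fun t : ℝ => T / (π * t)) (Set.Icc t₀ T) := by
    apply ContinuousOn.div continuousOn_const (by fun_prop)
    intro t ht
    have : 0 < t := by linarith [ht.1]
    positivity
  have hlog : ∀ t ∈ Set.Ioo t₀ T, 0 ≤ Real.log (t / (2 * π)) := by
    intro t ht
    apply Real.log_nonneg
    rw [le_div_iff₀ (by positivity)]
    linarith [ht.1]
  rcases le_total (2 / 5 * T) t₀ with hcase | hcase
  · have := int_le t₀ T h1 h2 (fun t => T / (π * t) * Real.log (t / (2 * π)))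
      (fun t => T / (2 * π) * Real.log (t / (2 * π)) ^ 2) ?_ (hc1.mul hlogc) ?_
    · calc _ ≤ 2 * π / T * (T / (2 * π) * Real.log (T / (2 * π)) ^ 2
          - T / (2 * π) * Real.log (t₀ / (2 * π)) ^ 2) :=
            mul_le_mul_of_nonneg_left this (by positivity)
        _ = _ := by field_simp
    · intro t ht
      have ht0 : 0 < t := by linarith [ht.1]
      refine (((hasDeriv_log t ht0).fun_pow 2).const_mul (T / (2 * π))).congr_deriv ?_
      simp only [Nat.cast_ofNat, show 2 - 1 = 1 from rfl, pow_one]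
      field_simp
    · intro t ht
      have ht0 : 0 < t := by linarith [ht.1]
      apply mul_le_mul_of_nonneg_right _ (hlog t ht)
      have hx : 2 / 5 ≤ t / T := by rw [le_div_iff₀ hT]; linarith [ht.1]
      have : (2 - 5 * (t / T)) * (1 + t / T) / (6 * π) ≤ 0 := by
        apply div_nonpos_of_nonpos_of_nonneg _ (by positivity)
        nlinarith
      linarith
  · set m := Real.log (2 / 5 * T / (2 * π)) with hm
    have hm0 : 0 ≤ m := by
      apply Real.log_nonneg
      rw [le_div_iff₀ (by positivity)]
      linarith
    have := int_le t₀ T h1 h2 (fun t => T / (π * t) * Real.log (t / (2 * π)) +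
        (2 - 5 * (t / T)) * (1 + t / T) / (6 * π) * m)
      (fun t => T / (2 * π) * Real.log (t / (2 * π)) ^ 2 +
        T / π * m * (1 / 3 * (t / T) - 1 / 4 * (t / T) ^ 2 - 5 / 18 * (t / T) ^ 3))
        ?_ ((hc1.mul hlogc).add (by fun_prop)) ?_
    · set x := t₀ / T with hx
      have hx0 : 0 < x := by positivity
      have hx1 : x ≤ 2 / 5 := by rw [hx, div_le_iff₀ hT]; exact hcase
      have hTT : T / T = 1 := div_self hT.ne'
      simp only [hTT] at this
      have hpos : 0 ≤ 1 / 3 * x - 1 / 4 * x ^ 2 - 5 / 18 * x ^ 3 := by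
        have : 0 ≤ x * (1 / 3 - 1 / 4 * x - 5 / 18 * x ^ 2) := by
          apply mul_nonneg hx0.le
          nlinarith
        linarith
      have hneg : T / π * m * (1 / 3 * 1 - 1 / 4 * 1 ^ 2 - 5 / 18 * 1 ^ 3) ≤ 0 := by
        apply mul_nonpos_of_nonneg_of_nonpos (by positivity)
        norm_num
      have hpos2 : 0 ≤ T / π * m * (1 / 3 * x - 1 / 4 * x ^ 2 - 5 / 18 * x ^ 3) :=
        mul_nonneg (by positivity) hpos
      calc _ ≤ 2 * π / T * (T / (2 * π) * Real.log (T / (2 * π)) ^ 2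
          - T / (2 * π) * Real.log (t₀ / (2 * π)) ^ 2) :=
            mul_le_mul_of_nonneg_left (by linarith) (by positivity)
        _ = _ := by field_simp
    · intro t ht
      have ht0 : 0 < t := by linarith [ht.1]
      have d : HasDerivAt (fun x : ℝ => x / T) (1 / T) t := (hasDerivAt_id t).div_const T
      refine ((((hasDeriv_log t ht0).fun_pow 2).const_mul (T / (2 * π))).add
        ((((d.const_mul (1 / 3)).sub ((d.fun_pow 2).const_mul (1 / 4))).sub
          ((d.fun_pow 3).const_mul (5 / 18))).const_mul (T / π * m))).congr_deriv ?_
      simp only [Nat.cast_ofNat, show 2 - 1 = 1 from rfl, show 3 - 1 = 2 from rfl, pow_one]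
      field_simp
      ring
    · intro t ht
      have ht0 : 0 < t := by linarith [ht.1]
      simp only [add_mul]
      have hp : 0 ≤ (1 + t / T) / (6 * π) := by positivity
      have key : (2 - 5 * (t / T)) * Real.log (t / (2 * π)) ≤ (2 - 5 * (t / T)) * m := by
        rcases le_total t (2 / 5 * T) with hc | hc
        · apply mul_le_mul_of_nonneg_left
          · apply Real.log_le_log (by positivity)
            gcongr
          · have : t / T ≤ 2 / 5 := by rw [div_le_iff₀ hT]; exact hc
            linarith
        · apply mul_le_mul_of_nonpos_left
          · apply Real.log_le_log (by positivity)
            gcongr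
          · have : 2 / 5 ≤ t / T := by rw [le_div_iff₀ hT]; exact hc
            linarith
      have := mul_le_mul_of_nonneg_left key hp
      have e1 : (2 - 5 * (t / T)) * (1 + t / T) / (6 * π) * Real.log (t / (2 * π)) =
        (1 + t / T) / (6 * π) * ((2 - 5 * (t / T)) * Real.log (t / (2 * π))) := by ring
      have e2 : (2 - 5 * (t / T)) * (1 + t / T) / (6 * π) * m =
        (1 + t / T) / (6 * π) * ((2 - 5 * (t / T)) * m) := by ring
      rw [e1, e2]
      linarith

theorem part_b (t₀ T : ℝ) (h1 : 2 * π ≤ t₀) (h2 : t₀ ≤ T)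
    (h3 : 2 * π * Real.exp 1 ≤ t₀) (h4 : 3 * t₀ ≤ T) :
    2 * π / T * ∫ t in Set.Icc t₀ T,
          Real.sqrt (Fcot (t / T) ^ 2 + (1 - t / T) ^ 2) * Real.log (t / (2 * π))
        ≤ Real.log (T / (2 * π)) ^ 2 - Real.log (t₀ / (2 * π)) ^ 2
          - 2 * Cconst 1 * Real.log (Real.exp 1 * T / (2 * π)) + 2 * Cconst 2 := by
  have hpi := Real.pi_pos
  have ht₀ : 0 < t₀ := by linarith
  have hT : 0 < T := by linarith
  have hlogc : ContinuousOn (fun t => Real.log (t / (2 * π))) (Set.Icc t₀ T) := by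
    intro t ht
    exact (hasDeriv_log t (by linarith [ht.1])).continuousAt.continuousWithinAt
  have hc1 : ContinuousOn (fun t : ℝ => T / (π * t)) (Set.Icc t₀ T) := by
    apply ContinuousOn.div continuousOn_const (by fun_prop)
    intro t ht
    have : 0 < t := by linarith [ht.1]
    positivity
  have := int_le t₀ T h1 h2 
    (fun t => (T / (π * t) + (2 - 5 * (t / T)) * (1 + t / T) / (6 * π)) * Real.log (t / (2 * π)))
    (fun t => T / (2 * π) * Real.log (t / (2 * π)) ^ 2 +
      T / π * ((1 / 3 * (t / T) - 1 / 4 * (t / T) ^ 2 - 5 / 18 * (t / T) ^ 3) * Real.log (t / (2 * π))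
        - (1 / 3 * (t / T) - 1 / 8 * (t / T) ^ 2 - 5 / 54 * (t / T) ^ 3)))
        ?_ ((hc1.add (by fun_prop)).mul hlogc) (fun t _ => le_rfl)
  · have hTT : T / T = 1 := div_self hT.ne'
    simp only [hTT] at this
    have hlogT : Real.log (Real.exp 1 * T / (2 * π)) = 1 + Real.log (T / (2 * π)) := by
      rw [mul_div_assoc, Real.log_mul (Real.exp_pos 1).ne' (by positivity), Real.log_exp]
    have hM : 1 ≤ Real.log (t₀ / (2 * π)) := by
      rw [Real.le_log_iff_exp_le (by positivity), le_div_iff₀ (by positivity)]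
      linarith
    have hL : 2 ≤ Real.log (T / (2 * π)) := by
      have : Real.log (3 * (t₀ / (2 * π))) ≤ Real.log (T / (2 * π)) := by
        apply Real.log_le_log (by positivity)
        rw [← mul_div_assoc]
        gcongr
      rw [Real.log_mul (by norm_num) (by positivity)] at this
      have h3 : 1 ≤ Real.log 3 := by
        rw [Real.le_log_iff_exp_le (by norm_num)]
        linarith [Real.exp_one_lt_d9]
      linarith
    rw [hlogT]
    set L := Real.log (T / (2 * π))
    set M := Real.log (t₀ / (2 * π))
    set x := t₀ / T with hx
    have hx0 : 0 < x := by positivity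
    have hx1 : x ≤ 1 / 3 := by rw [hx, div_le_iff₀ hT]; linarith
    have hC1 := C1_upper
    have hC2 := C2_lower
    have hmain := mul_le_mul_of_nonneg_left this (show 0 ≤ 2 * π / T by positivity)
    refine hmain.trans ?_
    have e : ∀ X Y Z W : ℝ, 2 * π / T * (T / (2 * π) * X + T / π * Y - (T / (2 * π) * Z + T / π * W))
        = X - Z + 2 * (Y - W) := by
      intro X Y Z W; field_simp; ring
    rw [e]
    have hpos : 0 ≤ 1 / 3 * x - 1 / 4 * x ^ 2 - 5 / 18 * x ^ 3 := by
      have : 0 ≤ x * (1 / 3 - 1 / 4 * x - 5 / 18 * x ^ 2) := by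
        apply mul_nonneg hx0.le
        nlinarith
      linarith
    have q1 := mul_nonneg hpos (sub_nonneg.2 hM)
    have q2 : x ^ 2 ≤ 1 / 9 := by nlinarith
    have q3 : x ^ 3 ≤ 1 / 27 := by
      have : x * x ^ 2 ≤ 1 / 3 * (1 / 9) := mul_le_mul hx1 q2 (by positivity) (by norm_num)
      linarith
    have q4 : Cconst 1 * (1 + L) ≤ 0.19 * (1 + L) := mul_le_mul_of_nonneg_right hC1 (by linarith)
    linarith
  · intro t ht
    have ht0 : 0 < t := by linarith [ht.1]
    have d : HasDerivAt (fun x : ℝ => x / T) (1 / T) t := (hasDerivAt_id t).div_const T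
    refine ((((hasDeriv_log t ht0).fun_pow 2).const_mul (T / (2 * π))).add
      ((((((d.const_mul (1 / 3)).sub ((d.fun_pow 2).const_mul (1 / 4))).sub
        ((d.fun_pow 3).const_mul (5 / 18))).mul (hasDeriv_log t ht0)).sub
        (((d.const_mul (1 / 3)).sub ((d.fun_pow 2).const_mul (1 / 8))).sub
        ((d.fun_pow 3).const_mul (5 / 54)))).const_mul (T / π))).congr_deriv ?_
    simp only [Nat.cast_ofNat, show 2 - 1 = 1 from rfl, show 3 - 1 = 2 from rfl, pow_one, Pi.sub_apply]
    field_simp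
    ring

theorem stmt_11 (t₀ T : ℝ) (h1 : 2 * π ≤ t₀) (h2 : t₀ ≤ T) :
    (2 * π / T * ∫ t in Set.Icc t₀ T,
        Real.sqrt (Fcot (t / T) ^ 2 + (1 - t / T) ^ 2) * Real.log (t / (2 * π))
      ≤ Real.log (T / (2 * π)) ^ 2 - Real.log (t₀ / (2 * π)) ^ 2)
    ∧
    (2 * π * Real.exp 1 ≤ t₀ → 3 * t₀ ≤ T →
      2 * π / T * ∫ t in Set.Icc t₀ T,
          Real.sqrt (Fcot (t / T) ^ 2 + (1 - t / T) ^ 2) * Real.log (t / (2 * π))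
        ≤ Real.log (T / (2 * π)) ^ 2 - Real.log (t₀ / (2 * π)) ^ 2
          - 2 * Cconst 1 * Real.log (Real.exp 1 * T / (2 * π)) + 2 * Cconst 2) := by
  exact ⟨part_a t₀ T h1 h2, part_b t₀ T h1 h2⟩
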